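/- The variance V_n of the number of non-zero-blocks of a uniformly random (c,m)-colored B_n-partition satisfies V_n ~ n/log² n as n → ∞; that is, V_n·(log² n)/n → 1. In particular, V_n → ∞ as n → ∞. -/

import Mathlib

open Filter

def Tnk (m c : ℕ) : ℕ → ℕ → ℕ
  | 0, 0 => 1
  | 0, _ + 1 => 0
  | n + 1, 0 => c * Tnk m c n 0
  | n + 1, k + 1 => Tnk m c n k + (m * (k + 1) + c) * Tnk m c n (k + 1)

def Ttot (m c n : ℕ) : ℕ := ∑ k ∈ Finset.range (n + 1), Tnk m c n k

/-- The expectation `E_n = (∑_k k·T_{n,k})/T_n`. -/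
noncomputable def En (m c n : ℕ) : ℝ :=
  (∑ k ∈ Finset.range (n + 1), (k : ℝ) * Tnk m c n k) / Ttot m c n

/-- The variance `V_n = (∑_k k²·T_{n,k})/T_n − E_n²`. -/
noncomputable def Vn (m c n : ℕ) : ℝ :=
  (∑ k ∈ Finset.range (n + 1), (k : ℝ) ^ 2 * Tnk m c n k) / Ttot m c n -
    En m c n ^ 2


theorem HasSum.congr_fun' {f g : ℕ → ℝ} {a : ℝ} (h : HasSum f a) (e : ∀ j, g j = f j) : HasSum g a := by
  have : g = f := funext e
  rw [this]; exact h

theorem Tnk_zero_of_lt (m c : ℕ) : ∀ n k, n < k → Tnk m c n k = 0 := by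
  intro n
  induction n with
  | zero => intro k hk; cases k with
    | zero => omega
    | succ k => rfl
  | succ n ih => intro k hk; cases k with
    | zero => omega
    | succ k => simp [Tnk, ih k (by omega), ih (k+1) (by omega)]

/-- weighted sum recursion -/
theorem Tnk_sum_succ (m c n : ℕ) (f : ℕ → ℝ) :
    ∑ k ∈ Finset.range (n + 2), f k * (Tnk m c (n+1) k : ℝ) =
    ∑ k ∈ Finset.range (n + 1), (f (k+1) + (m * k + c) * f k) * (Tnk m c n k : ℝ) := by
  have h1 : ∑ k ∈ Finset.range (n + 1), ((m * k + c) * f k) * (Tnk m c n k : ℝ)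
      = c * f 0 * Tnk m c n 0 + ∑ k ∈ Finset.range (n + 1),
        ((m * (k+1) + c) * f (k+1)) * (Tnk m c n (k+1) : ℝ) := by
    have := Finset.sum_range_succ' (fun k : ℕ => ((m * k + c) * f k) * (Tnk m c n k : ℝ)) (n+1)
    rw [Finset.sum_range_succ, Tnk_zero_of_lt m c n (n+1) (by omega)] at this
    simp at this
    rw [this]; ring
  rw [Finset.sum_range_succ']
  simp only [add_mul, Finset.sum_add_distrib] at h1 ⊢
  rw [h1]
  simp only [Tnk]
  push_cast
  simp only [mul_add, add_mul, Finset.sum_add_distrib]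
  have e : ∀ k : ℕ, f (k+1) * (((m:ℝ) * k) * (Tnk m c n (k+1) : ℝ)) = m * k * f (k+1) * Tnk m c n (k+1) := by intro k; ring
  have e2 : ∀ k : ℕ, f (k+1) * (((m:ℝ) * 1) * (Tnk m c n (k+1) : ℝ)) = m * 1 * f (k+1) * Tnk m c n (k+1) := by intro k; ring
  have e3 : ∀ k : ℕ, f (k+1) * ((c:ℝ) * (Tnk m c n (k+1) : ℝ)) = c * f (k+1) * Tnk m c n (k+1) := by intro k; ring
  simp only [e, e2, e3]
  ring

theorem Ttot_cast (m c n : ℕ) : (Ttot m c n : ℝ) = ∑ k ∈ Finset.range (n+1), (Tnk m c n k : ℝ) := by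
  simp [Ttot]

theorem Ttot_succ (m c n : ℕ) : (Ttot m c (n+1) : ℝ) =
    m * (∑ k ∈ Finset.range (n + 1), (k : ℝ) * Tnk m c n k) + (1 + c) * Ttot m c n := by
  have := Tnk_sum_succ m c n (fun _ => 1)
  simp only [one_mul, mul_one] at this
  rw [Ttot_cast, this, Ttot_cast, Finset.mul_sum, Finset.mul_sum, ← Finset.sum_add_distrib]
  exact Finset.sum_congr rfl fun k _ => by ring

theorem Ttot_succ2 (m c n : ℕ) : (Ttot m c (n+2) : ℝ) =
    m^2 * (∑ k ∈ Finset.range (n + 1), (k : ℝ)^2 * Tnk m c n k) +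
    2 * m * (1 + c) * (∑ k ∈ Finset.range (n + 1), (k : ℝ) * Tnk m c n k)
    + ((1 + c)^2 + m) * Ttot m c n := by
  have h1 := Tnk_sum_succ m c n (fun k => (k : ℝ))
  rw [Ttot_succ m c (n+1), h1, Ttot_succ m c n, Ttot_cast]
  have : ∑ k ∈ Finset.range (n + 1), (((k+1 : ℕ) : ℝ) + (m * k + c) * k) * (Tnk m c n k : ℝ)
    = m * (∑ k ∈ Finset.range (n + 1), (k : ℝ)^2 * Tnk m c n k) +
      (1 + c) * (∑ k ∈ Finset.range (n + 1), (k : ℝ) * Tnk m c n k) + 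
      ∑ k ∈ Finset.range (n + 1), (Tnk m c n k : ℝ) := by
    rw [Finset.mul_sum, Finset.mul_sum, ← Finset.sum_add_distrib, ← Finset.sum_add_distrib]
    exact Finset.sum_congr rfl fun k _ => by push_cast; ring
  rw [this]; ring

theorem Ttot_pos (m c n : ℕ) (hc : 0 < c) : 0 < Ttot m c n := by
  unfold Ttot
  refine Finset.sum_pos' (fun _ _ => Nat.zero_le _) ⟨0, by simp, ?_⟩
  induction n with
  | zero => simp [Tnk]
  | succ n ih => simp only [Tnk]; positivity

theorem Vn_eq (m c n : ℕ) (hm : 0 < m) (hc : 0 < c) : Vn m c n =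
    ((Ttot m c (n+2) : ℝ) / Ttot m c n - ((Ttot m c (n+1) : ℝ) / Ttot m c n)^2) / m^2 - 1 / m := by
  have hT : (Ttot m c n : ℝ) ≠ 0 := by exact_mod_cast (Ttot_pos m c n hc).ne'
  have hm' : (m : ℝ) ≠ 0 := by exact_mod_cast hm.ne'
  rw [Ttot_succ2, Ttot_succ]
  unfold Vn En
  field_simp
  ring

theorem pow_expand (m c n j : ℕ) : ((m : ℝ) * j + c)^n =
    ∑ k ∈ Finset.range (n+1), (m : ℝ)^k * (j.descFactorial k : ℝ) * Tnk m c n k := by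
  induction n with
  | zero => simp [Tnk]
  | succ n ih =>
    rw [Tnk_sum_succ m c n (fun k => (m : ℝ)^k * (j.descFactorial k : ℝ)), pow_succ, ih, Finset.sum_mul]
    refine Finset.sum_congr rfl fun k _ => ?_
    rw [Nat.descFactorial_succ]
    push_cast
    rcases le_or_gt k j with h | h
    · rw [Nat.cast_sub h]; ring
    · rw [Nat.descFactorial_of_lt h]; simp

noncomputable def wgt (m c n j : ℕ) : ℝ := ((m : ℝ) * j + c)^n / ((m : ℝ)^j * (j.factorial : ℝ))

theorem hasSum_desc (m k : ℕ) (hm : 0 < m) :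
    HasSum (fun j : ℕ => (m : ℝ)^k * (j.descFactorial k : ℝ) / ((m : ℝ)^j * (j.factorial : ℝ)))
      (Real.exp (1 / m)) := by
  have hm' : (m : ℝ) ≠ 0 := by exact_mod_cast hm.ne'
  rw [← hasSum_nat_add_iff' k]
  have h0 : ∑ i ∈ Finset.range k, (m : ℝ)^k * (i.descFactorial k : ℝ) / ((m : ℝ)^i * (i.factorial : ℝ)) = 0 := by
    refine Finset.sum_eq_zero fun i hi => ?_
    rw [Nat.descFactorial_of_lt (Finset.mem_range.1 hi)]; simp
  rw [h0, sub_zero]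
  have := NormedSpace.expSeries_div_hasSum_exp (1 / (m:ℝ))
  rw [← Real.exp_eq_exp_ℝ] at this
  have key : (fun j : ℕ => (m : ℝ)^k * ((j+k).descFactorial k : ℝ) / ((m : ℝ)^(j+k) * ((j+k).factorial : ℝ)))
    = fun n : ℕ => (1 / (m:ℝ)) ^ n / n.factorial := by
   funext j
   have h1 : (j + k).factorial = j.factorial * (j+k).descFactorial k := by
     have := Nat.factorial_mul_descFactorial (n := j+k) (k := k) (by omega)
     rw [← this]; simp
   have h2 : ((j+k).descFactorial k : ℝ) ≠ 0 := by
     have : (j+k).descFactorial k ≠ 0 := by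
       intro h; rw [Nat.descFactorial_eq_zero_iff_lt] at h; omega
     exact_mod_cast this
   have h3 : (j.factorial : ℝ) ≠ 0 := by exact_mod_cast Nat.factorial_ne_zero j
   rw [h1]
   push_cast
   rw [pow_add, one_div, inv_pow]
   field_simp
  rw [key]
  exact this

theorem hasSum_wgt (m c n : ℕ) (hm : 0 < m) :
    HasSum (wgt m c n) (Real.exp (1/m) * Ttot m c n) := by
  have : HasSum (fun j => ∑ k ∈ Finset.range (n+1), (m : ℝ)^k * (j.descFactorial k : ℝ) / ((m : ℝ)^j * (j.factorial : ℝ)) * Tnk m c n k) (∑ k ∈ Finset.range (n+1), Real.exp (1/m) * Tnk m c n k) :=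
    hasSum_sum fun k _ => (hasSum_desc m k hm).mul_right _
  rw [← Finset.mul_sum, ← Ttot_cast] at this
  convert this using 2 with j
  unfold wgt
  rw [pow_expand, Finset.sum_div]
  exact Finset.sum_congr rfl fun k _ => by ring

theorem wgt_pos (m c n j : ℕ) (hm : 0 < m) (hc : 0 < c) : 0 < wgt m c n j := by
  unfold wgt; positivity

theorem wgt_succ (m c n j : ℕ) : wgt m c (n+1) j = (m * j + c) * wgt m c n j := by
  unfold wgt; rw [pow_succ]; ring

/-- `V_n` as the variance of the Dobinski-type measure -/
theorem Vn_eq_var (m c n : ℕ) (hm : 0 < m) (hc : 0 < c) (a : ℝ) :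
    ∃ w : ℕ → ℝ, ∃ E1 E2 : ℝ, (∀ j, w j = wgt m c n j / (Real.exp (1/m) * Ttot m c n)) ∧ 
      HasSum w 1 ∧ HasSum (fun j : ℕ => ((j:ℝ) - a) * w j) E1 ∧
      HasSum (fun j : ℕ => ((j:ℝ) - a)^2 * w j) E2 ∧ Vn m c n = E2 - E1^2 - 1 / m := by
  have hT : (0:ℝ) < Ttot m c n := by exact_mod_cast (Ttot_pos m c n hc)
  have hm' : (m : ℝ) ≠ 0 := by exact_mod_cast hm.ne'
  have he := Real.exp_pos (1/(m:ℝ))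
  have h0 := (hasSum_wgt m c n hm).div_const (Real.exp (1/m) * Ttot m c n)
  have h1 := (hasSum_wgt m c (n+1) hm).div_const (Real.exp (1/m) * Ttot m c n)
  have h2 := (hasSum_wgt m c (n+2) hm).div_const (Real.exp (1/m) * Ttot m c n)
  rw [div_self (by positivity)] at h0
  simp only [mul_div_mul_left _ _ he.ne', wgt_succ] at h1 h2
  set r1 := (Ttot m c (n+1) : ℝ) / Ttot m c n with hr1
  set r2 := (Ttot m c (n+2) : ℝ) / Ttot m c n with hr2
  refine ⟨_, (r1 - (c + m * a)) / m, (r2 - 2 * (c + m * a) * r1 + (c + m*a)^2) / m^2, fun j => rfl, h0, ?_, ?_, ?_⟩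
  · have := (h1.sub (h0.mul_left (c + m * a))).div_const (m:ℝ)
    rw [mul_one] at this
    refine this.congr_fun' ?_
    intro j; field_simp; ring
  · have := ((h2.sub (h1.mul_left (2 * (c + m * a)))).add (h0.mul_left ((c + m * a)^2))).div_const ((m:ℝ)^2)
    rw [mul_one] at this
    refine this.congr_fun' ?_
    intro j; field_simp; ring
  · rw [Vn_eq m c n hm hc, ← hr1, ← hr2]
    field_simp
    ring

theorem pow_diff_le (x : ℝ) (hx : 1 ≤ x) (p : ℕ) : x^(p+1) - (x-1)^(p+1) ≤ (p+1) * x^p := by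
  induction p with
  | zero => simp
  | succ p ih =>
    have h1 : (x-1)^(p+1) ≤ x^(p+1) := pow_le_pow_left₀ (by linarith) (by linarith) _
    have h2 := mul_le_mul_of_nonneg_left ih (by linarith : 0 ≤ x)
    push_cast
    rw [pow_succ x (p+1), pow_succ (x-1) (p+1)]
    have h3 : x * ((p+1) * x^p) = (p+1) * x^(p+1) := by ring
    nlinarith

theorem abel_ineq (u : ℕ → ℝ) (hu0 : ∀ k, 0 ≤ u k) (p M : ℕ) :
    ∑ k ∈ Finset.range (M+1), (k:ℝ)^(p+1) * (u k - u (k+1)) + (M:ℝ)^(p+1) * u (M+1) ≤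
    (p+1) * ∑ k ∈ Finset.range (M+1), (k:ℝ)^p * u k := by
  induction M with
  | zero =>
    simp
    have := hu0 0
    positivity
  | succ M ih =>
    rw [Finset.sum_range_succ, Finset.sum_range_succ _ (M+1), mul_add]
    have h := pow_diff_le ((M:ℝ)+1) (by linarith [(Nat.cast_nonneg M : (0:ℝ) ≤ M)]) p
    have h2 := mul_le_mul_of_nonneg_right h (hu0 (M+1))
    rw [add_sub_cancel_right] at h2
    push_cast
    nlinarith

theorem moment_step (u : ℕ → ℝ) (hu0 : ∀ k, 0 ≤ u k) (hanti : ∀ k, u (k+1) ≤ u k) (D : ℝ) (hD : 0 < D)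
    (hdec : ∀ k : ℕ, D ≤ k → u (k+1) ≤ (1 - 1/D) * u k) (p M : ℕ) :
    ∑ k ∈ Finset.range (M+1), (k:ℝ)^(p+1) * u k ≤ D^(p+1) * ∑ k ∈ Finset.range (M+1), u k
      + D * ((p+1) * ∑ k ∈ Finset.range (M+1), (k:ℝ)^p * u k) := by
  have h1 := abel_ineq u hu0 p M
  have h2 : 0 ≤ (M:ℝ)^(p+1) * u (M+1) := mul_nonneg (by positivity) (hu0 _)
  have h3 : ∑ k ∈ Finset.range (M+1), (k:ℝ)^(p+1) * u k ≤ D^(p+1) * ∑ k ∈ Finset.range (M+1), u k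
      + D * ∑ k ∈ Finset.range (M+1), (k:ℝ)^(p+1) * (u k - u (k+1)) := by
    rw [Finset.mul_sum, Finset.mul_sum, ← Finset.sum_add_distrib]
    refine Finset.sum_le_sum fun k _ => ?_
    rcases le_total (k:ℝ) D with h | h
    · have a1 : (k:ℝ)^(p+1) ≤ D^(p+1) := pow_le_pow_left₀ (by positivity) h _
      have a2 : 0 ≤ D * ((k:ℝ)^(p+1) * (u k - u (k+1))) :=
        mul_nonneg hD.le (mul_nonneg (by positivity) (by linarith [hanti k]))
      nlinarith [mul_le_mul_of_nonneg_right a1 (hu0 k)]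
    · have a1 := hdec k h
      have a2 : u k ≤ D * (u k - u (k+1)) := by
        have : u k / D ≤ u k - u (k+1) := by
          have : (1 - 1/D) * u k = u k - u k / D := by ring
          linarith
        rw [div_le_iff₀ hD] at this
        linarith
      have a3 : (k:ℝ)^(p+1) * u k ≤ (k:ℝ)^(p+1) * (D * (u k - u (k+1))) :=
        mul_le_mul_of_nonneg_left a2 (by positivity)
      have a4 : 0 ≤ D^(p+1) * u k := mul_nonneg (by positivity) (hu0 k)
      nlinarith
  have := mul_le_mul_of_nonneg_left (show ∑ k ∈ Finset.range (M+1), (k:ℝ)^(p+1) * (u k - u (k+1)) ≤ (p+1) * ∑ k ∈ Finset.range (M+1), (k:ℝ)^p * u k by linarith) hD.le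
  linarith

theorem moment4 (u : ℕ → ℝ) (hu0 : ∀ k, 0 ≤ u k) (hanti : ∀ k, u (k+1) ≤ u k) (D : ℝ) (hD : 0 < D)
    (hdec : ∀ k : ℕ, D ≤ k → u (k+1) ≤ (1 - 1/D) * u k) (M : ℕ) :
    ∑ k ∈ Finset.range (M+1), (k:ℝ)^4 * u k ≤ 65 * D^4 * ∑ k ∈ Finset.range (M+1), u k := by
  have h0 := moment_step u hu0 hanti D hD hdec 0 M
  have h1 := moment_step u hu0 hanti D hD hdec 1 M
  have h2 := moment_step u hu0 hanti D hD hdec 2 M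
  have h3 := moment_step u hu0 hanti D hD hdec 3 M
  norm_num at h0 h1 h2 h3
  set S := ∑ k ∈ Finset.range (M+1), u k
  set S1 := ∑ k ∈ Finset.range (M+1), (k:ℝ) * u k
  set S2 := ∑ k ∈ Finset.range (M+1), (k:ℝ)^2 * u k
  set S3 := ∑ k ∈ Finset.range (M+1), (k:ℝ)^3 * u k
  have b1 : S1 ≤ 2 * D * S := by linarith
  have b2 : S2 ≤ 5 * D^2 * S := by nlinarith [mul_le_mul_of_nonneg_left b1 hD.le]
  have b3 : S3 ≤ 16 * D^3 * S := by nlinarith [mul_le_mul_of_nonneg_left b2 hD.le]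
  nlinarith [mul_le_mul_of_nonneg_left b3 hD.le]

theorem decay5 (u : ℕ → ℝ) (hu0 : ∀ k, 0 ≤ u k) (hanti : ∀ k, u (k+1) ≤ u k) (D : ℝ) (hD : 0 < D)
    (hdec : ∀ k : ℕ, D ≤ k → u (k+1) ≤ (1 - 1/D) * u k) (Z : ℝ) (hZ : ∀ M, ∑ k ∈ Finset.range M, u k ≤ Z) (k : ℕ) :
    (k:ℝ)^5 * u k ≤ 325 * D^4 * Z := by
  have h := moment4 u hu0 hanti D hD hdec k
  have hm : Antitone u := antitone_nat_of_succ_le hanti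
  have h1 : (∑ l ∈ Finset.range (k+1), (l:ℝ)^4) * u k ≤ ∑ l ∈ Finset.range (k+1), (l:ℝ)^4 * u l := by
    rw [Finset.sum_mul]
    refine Finset.sum_le_sum fun l hl => ?_
    exact mul_le_mul_of_nonneg_left (hm (by simp at hl; omega)) (by positivity)
  have h2 : ∀ k : ℕ, (k:ℝ)^5 ≤ 5 * ∑ l ∈ Finset.range (k+1), (l:ℝ)^4 := by
    intro k
    induction k with
    | zero => simp
    | succ k ih =>
      rw [Finset.sum_range_succ]
      have := pow_diff_le ((k:ℝ)+1) (by linarith [(Nat.cast_nonneg k : (0:ℝ) ≤ k)]) 4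
      rw [add_sub_cancel_right] at this
      push_cast at *
      linarith
  have h3 := mul_le_mul_of_nonneg_right (h2 k) (hu0 k)
  have h4 := mul_le_mul_of_nonneg_left (hZ (k+1)) (by positivity : 0 ≤ 65 * D^4)
  nlinarith

theorem tail_bound (g H : ℕ → ℝ) (S : Finset ℕ) (E C δ : ℝ) (hg : HasSum g E) (hH : Summable H)
    (hC : ∑' j, H j ≤ C) (hH0 : ∀ j, 0 ≤ H j) (hδ : 0 ≤ δ) (hb : ∀ j ∉ S, |g j| ≤ δ * H j) :
    |E - ∑ j ∈ S, g j| ≤ δ * C := by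
  classical
  have h1 : HasSum (fun j => if j ∈ S then g j else 0) (∑ j ∈ S, g j) := by
    have : ∑ j ∈ S, g j = ∑ j ∈ S, (if j ∈ S then g j else 0) :=
      Finset.sum_congr rfl fun j hj => by simp [hj]
    rw [this]
    exact hasSum_sum_of_ne_finset_zero fun j hj => by simp [hj]
  have h2 := hg.sub h1
  have h3 : ∀ j, ‖g j - (if j ∈ S then g j else 0)‖ ≤ δ * H j := by
    intro j
    by_cases hj : j ∈ S
    · simp [hj]; exact mul_nonneg hδ (hH0 j)
    · simpa [hj] using hb j hj
  have h4 := tsum_of_norm_bounded (hH.mul_left δ).hasSum h3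
  rw [h2.tsum_eq, tsum_mul_left] at h4
  exact h4.trans (mul_le_mul_of_nonneg_left hC hδ)

/-- Consequences of exponential tails: fourth moment, and pointwise bounds. -/
theorem moments (w : ℕ → ℝ) (a s : ℝ) (hw : ∀ j, 0 ≤ w j) (hw1 : HasSum w 1) (hs : 1 ≤ s) (ha : 0 ≤ a)
    (hR : ∀ j : ℕ, a ≤ j → w (j+1) ≤ w j) (hL : ∀ j : ℕ, (j:ℝ) ≤ a → w j ≤ w (j+1))
    (hR' : ∀ j : ℕ, a + s ≤ j → w (j+1) ≤ (1 - 1/(2*s)) * w j)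
    (hL' : ∀ j : ℕ, (j:ℝ) ≤ a - s → w j ≤ (1 - 1/(2*s)) * w (j+1)) :
    (Summable (fun j : ℕ => ((j:ℝ)-a)^4 * w j) ∧ ∑' j : ℕ, ((j:ℝ)-a)^4 * w j ≤ 17000 * s^4) ∧
    (∀ j : ℕ, a + 1 ≤ j → ((j:ℝ) - a - 1)^5 * w j ≤ 5200 * s^4) ∧
    (∀ j : ℕ, (j:ℝ) ≤ a - 1 → (a - j - 1)^5 * w j ≤ 5200 * s^4) := by
  set b := ⌊a⌋₊ with hb
  have hb1 : (b:ℝ) ≤ a := Nat.floor_le ha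
  have hb2 : a < b + 1 := Nat.lt_floor_add_one a
  have hpart : ∀ S : Finset ℕ, ∑ j ∈ S, w j ≤ 1 := fun S => sum_le_hasSum S (fun j _ => hw j) hw1
  set uR : ℕ → ℝ := fun k => w (b + 1 + k) with huR
  set uL : ℕ → ℝ := fun k => if k ≤ b then w (b - k) else 0 with huL
  have R0 : ∀ k, 0 ≤ uR k := fun k => hw _
  have L0 : ∀ k, 0 ≤ uL k := fun k => by simp only [huL]; split_ifs; exacts [hw _, le_rfl]
  have Ra : ∀ k, uR (k+1) ≤ uR k := fun k => by
    have := hR (b+1+k) (by push_cast; linarith [(Nat.cast_nonneg k : (0:ℝ) ≤ k)])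
    simpa [huR, add_assoc] using this
  have La : ∀ k, uL (k+1) ≤ uL k := fun k => by
    by_cases h : k + 1 ≤ b
    · have h' : k ≤ b := by omega
      simp only [huL, h, h', if_true]
      have := hL (b - (k+1)) (by rw [Nat.cast_sub h]; push_cast; linarith [(Nat.cast_nonneg k : (0:ℝ) ≤ k)])
      rwa [show b - (k+1) + 1 = b - k by omega] at this
    · have : uL (k+1) = 0 := by simp only [huL, h, if_false]
      rw [this]; exact L0 k
  have Rd : ∀ k : ℕ, 2*s ≤ k → uR (k+1) ≤ (1 - 1/(2*s)) * uR k := fun k hk => by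
    have := hR' (b+1+k) (by push_cast; linarith)
    simpa [huR, add_assoc] using this
  have hs' : 1/(2*s) ≤ 1 := by rw [div_le_one (by linarith)]; linarith
  have Ld : ∀ k : ℕ, 2*s ≤ k → uL (k+1) ≤ (1 - 1/(2*s)) * uL k := fun k hk => by
    by_cases h : k + 1 ≤ b
    · have h' : k ≤ b := by omega
      simp only [huL, h, h', if_true]
      have := hL' (b - (k+1)) (by rw [Nat.cast_sub h]; push_cast; linarith)
      rwa [show b - (k+1) + 1 = b - k by omega] at this
    · have : uL (k+1) = 0 := by simp only [huL, h, if_false]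
      rw [this]; exact mul_nonneg (by linarith) (L0 k)
  have Rs : ∀ M, ∑ k ∈ Finset.range M, uR k ≤ 1 := fun M => by
    have h := hpart (Finset.range (b+1+M))
    rw [Finset.sum_range_add] at h
    have : 0 ≤ ∑ x ∈ Finset.range (b+1), w x := Finset.sum_nonneg fun j _ => hw j
    linarith
  have Ls1 : ∑ k ∈ Finset.range (b+1), uL k ≤ 1 := by
    have h := hpart (Finset.range (b+1))
    rw [← Finset.sum_range_reflect] at h
    refine le_trans (le_of_eq ?_) h
    refine Finset.sum_congr rfl fun k hk => ?_
    have : k ≤ b := by simp at hk; omega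
    simp [huL, this]
  have Ls : ∀ M, ∑ k ∈ Finset.range M, uL k ≤ 1 := fun M => by
    refine le_trans ?_ Ls1
    rcases le_total M (b+1) with h | h
    · exact Finset.sum_le_sum_of_subset_of_nonneg (Finset.range_mono h) fun j _ _ => L0 j
    · refine le_of_eq (Finset.sum_subset (Finset.range_mono h) fun j _ hj => ?_).symm
      have : ¬ j ≤ b := by simp at hj; omega
      simp [huL, this]
  have h2s : 0 < 2 * s := by linarith
  have s4 : 1 ≤ s^4 := one_le_pow₀ hs
  have gen : ∀ (u : ℕ → ℝ), (∀ k, 0 ≤ u k) → (∀ k, u (k+1) ≤ u k) →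
    (∀ k : ℕ, 2*s ≤ k → u (k+1) ≤ (1 - 1/(2*s)) * u k) → (∀ M, ∑ k ∈ Finset.range M, u k ≤ 1) →
    ∀ M, ∑ k ∈ Finset.range (M+1), ((k:ℝ)+1)^4 * u k ≤ 8328 * s^4 := by
    intro u u0 ua ud us M
    have h := moment4 u u0 ua _ h2s ud M
    have h1 := us (M+1)
    have h2 : ∑ k ∈ Finset.range (M+1), ((k:ℝ)+1)^4 * u k ≤ 8 * ∑ k ∈ Finset.range (M+1), (k:ℝ)^4 * u k + 8 * ∑ k ∈ Finset.range (M+1), u k := by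
      rw [Finset.mul_sum, Finset.mul_sum, ← Finset.sum_add_distrib]
      refine Finset.sum_le_sum fun k _ => ?_
      have : ((k:ℝ)+1)^4 ≤ 8 * (k:ℝ)^4 + 8 := by
        nlinarith [sq_nonneg ((k:ℝ)-1), sq_nonneg ((k:ℝ)^2-1), sq_nonneg ((k:ℝ)^2-k), sq_nonneg ((k:ℝ)+1)]
      nlinarith [mul_le_mul_of_nonneg_right this (u0 k)]
    have h3 := mul_le_mul_of_nonneg_left h1 (by positivity : 0 ≤ 65 * (2*s)^4)
    nlinarith
  have pw : ∀ x y : ℝ, |x| ≤ y → x^4 ≤ y^4 := fun x y h => by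
    have := pow_le_pow_left₀ (abs_nonneg x) h 4
    rwa [Even.pow_abs (by decide)] at this
  have nn : ∀ j : ℕ, 0 ≤ ((j:ℝ)-a)^4 * w j := fun j => mul_nonneg (by positivity) (hw j)
  have part : ∀ n, ∑ j ∈ Finset.range n, ((j:ℝ)-a)^4 * w j ≤ 17000 * s^4 := by
    intro n
    have h1 : ∑ j ∈ Finset.range n, ((j:ℝ)-a)^4 * w j ≤ ∑ j ∈ Finset.range (b+1+(n+1)), ((j:ℝ)-a)^4 * w j :=
      Finset.sum_le_sum_of_subset_of_nonneg (Finset.range_mono (by omega)) fun j _ _ => nn j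
    rw [Finset.sum_range_add] at h1
    have h2 : ∑ k ∈ Finset.range (n+1), (((b+1+k:ℕ):ℝ)-a)^4 * w (b+1+k) ≤ 8328 * s^4 := by
      refine le_trans (Finset.sum_le_sum fun k _ => ?_) (gen uR R0 Ra Rd Rs n)
      refine mul_le_mul_of_nonneg_right (pw _ _ ?_) (hw _)
      push_cast
      rw [abs_le]; constructor <;> linarith [(Nat.cast_nonneg k : (0:ℝ) ≤ k)]
    have h3 : ∑ j ∈ Finset.range (b+1), ((j:ℝ)-a)^4 * w j ≤ 8328 * s^4 := by
      rw [← Finset.sum_range_reflect]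
      refine le_trans (Finset.sum_le_sum fun k hk => ?_) (gen uL L0 La Ld Ls b)
      have hk' : k ≤ b := by simp at hk; omega
      simp only [huL, hk', if_true, add_tsub_cancel_right]
      refine mul_le_mul_of_nonneg_right (pw _ _ ?_) (hw _)
      rw [Nat.cast_sub hk']
      rw [abs_le]; constructor <;> linarith [(Nat.cast_nonneg k : (0:ℝ) ≤ k)]
    linarith
  refine ⟨⟨summable_of_sum_range_le nn part, Real.tsum_le_of_sum_range_le nn part⟩, ?_, ?_⟩
  · intro j hj
    have hbj : b + 1 ≤ j := by
      have : (b:ℝ) + 1 ≤ j := by linarith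
      exact_mod_cast this
    obtain ⟨k, rfl⟩ := Nat.exists_eq_add_of_le hbj
    have := decay5 uR R0 Ra _ h2s Rd 1 Rs k
    have h5 : (((b+1+k:ℕ):ℝ) - a - 1)^5 ≤ (k:ℝ)^5 := by
      refine pow_le_pow_left₀ (by linarith) ?_ 5
      push_cast; linarith
    have := mul_le_mul_of_nonneg_right h5 (hw (b+1+k))
    simp only [huR] at *
    nlinarith
  · intro j hj
    have hbj : j ≤ b := by
      have : (j:ℝ) < b + 1 := by linarith
      have : j < b + 1 := by exact_mod_cast this
      omega
    have := decay5 uL L0 La _ h2s Ld 1 Ls (b - j)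
    have h5 : (a - j - 1)^5 ≤ (((b - j : ℕ)):ℝ)^5 := by
      refine pow_le_pow_left₀ (by linarith) ?_ 5
      rw [Nat.cast_sub hbj]; linarith
    have h6 := mul_le_mul_of_nonneg_right h5 (hw j)
    have h7 : uL (b - j) = w j := by
      simp only [huL, Nat.sub_le, if_true]; congr 1; omega
    rw [h7] at this
    nlinarith

set_option maxHeartbeats 1000000 in
theorem var_lemma (w : ℕ → ℝ) (a s K ε E1 E2 : ℝ) (hw : ∀ j, 0 ≤ w j) (hw1 : HasSum w 1)
    (hE1 : HasSum (fun j : ℕ => ((j:ℝ) - a) * w j) E1)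
    (hE2 : HasSum (fun j : ℕ => ((j:ℝ) - a)^2 * w j) E2)
    (hs : 1 ≤ s) (hK : 4 ≤ K) (hε : 0 ≤ ε) (ha : K * s ≤ a)
    (hR : ∀ j : ℕ, a ≤ j → w (j+1) ≤ w j) (hL : ∀ j : ℕ, (j:ℝ) ≤ a → w j ≤ w (j+1))
    (hR' : ∀ j : ℕ, a + s ≤ j → w (j+1) ≤ (1 - 1/(2*s)) * w j)
    (hL' : ∀ j : ℕ, (j:ℝ) ≤ a - s → w j ≤ (1 - 1/(2*s)) * w (j+1))
    (hW : ∀ j : ℕ, |(j:ℝ) - a| ≤ K * s → |s^2 * (w j - w (j+1)) - ((j:ℝ) - a) * w j| ≤ ε * s * w j) :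
    |E2 / s^2 - 1| ≤ 1000000 * (1/K + ε) ∧ |E1 / s| ≤ 1000000 * (1/K + ε) := by
  have hKs : 4 ≤ K * s := by nlinarith
  have hKp : 0 < K := by linarith
  have hsp : 0 < s := by linarith
  obtain ⟨⟨hS4, hT4⟩, hpR, hpL⟩ := moments w a s hw hw1 hs (by linarith) hR hL hR' hL'
  set H : ℕ → ℝ := fun j => ((j:ℝ)-a)^4 * w j with hH
  have H0 : ∀ j, 0 ≤ H j := fun j => mul_nonneg (by positivity) (hw j)
  set A := ⌈a - K * s⌉₊ with hA
  set B := ⌊a + K * s⌋₊ with hB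
  have A1 : a - K * s ≤ A := Nat.le_ceil _
  have A2 : (A:ℝ) < a - K * s + 1 := Nat.ceil_lt_add_one (by linarith)
  have B1 : (B:ℝ) ≤ a + K * s := Nat.floor_le (by linarith)
  have B2 : a + K * s < B + 1 := Nat.lt_floor_add_one _
  have hAB : A ≤ B := by
    have : (A:ℝ) ≤ B := by linarith
    exact_mod_cast this
  -- pointwise bounds
  set x := K * s / 2 with hx
  have hxp : 0 < x := by rw [hx]; linarith
  have wA : s * w A ≤ 166400 * (1/K^5) := by
    have h := hpL A (by linarith)
    have h1 : x^5 ≤ (a - A - 1)^5 := pow_le_pow_left₀ hxp.le (by rw [hx]; linarith) 5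
    have h2 := mul_le_mul_of_nonneg_right h1 (hw A)
    have h3 : x^5 * w A = (s * w A) * (K^5 / 32) * s^4 := by rw [hx]; ring
    have h4 : (s * w A) * (K^5 / 32) * s^4 ≤ 5200 * s^4 := by linarith
    have h5 := le_of_mul_le_mul_right h4 (by positivity)
    rw [mul_one_div, le_div_iff₀ (by positivity)]
    linarith
  have wB : s * w B ≤ 166400 * (1/K^5) := by
    have h := hpR B (by linarith)
    have h1 : x^5 ≤ (B - a - 1)^5 := pow_le_pow_left₀ hxp.le (by rw [hx]; linarith) 5
    have h2 := mul_le_mul_of_nonneg_right h1 (hw B)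
    have h3 : x^5 * w B = (s * w B) * (K^5 / 32) * s^4 := by rw [hx]; ring
    have h4 : (s * w B) * (K^5 / 32) * s^4 ≤ 5200 * s^4 := by linarith
    have h5 := le_of_mul_le_mul_right h4 (by positivity)
    rw [mul_one_div, le_div_iff₀ (by positivity)]
    linarith
  set W := Finset.Ico A B with hWdef
  set W' := Finset.Ico (A+1) (B+1) with hW'def
  have out : ∀ j ∉ W, x ≤ |(j:ℝ) - a| := by
    intro j hj
    simp only [hWdef, Finset.mem_Ico, not_and_or, not_le, not_lt] at hj
    rcases hj with h | h
    · have : (j:ℝ) + 1 ≤ A := by exact_mod_cast h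
      rw [hx]; exact le_trans (by linarith) (neg_le_abs _)
    · have : (B:ℝ) ≤ j := by exact_mod_cast h
      rw [hx]; exact le_trans (by linarith) (le_abs_self _)
  have out' : ∀ j ∉ W', x ≤ |(j:ℝ) - a| := by
    intro j hj
    simp only [hW'def, Finset.mem_Ico, not_and_or, not_le, not_lt] at hj
    rcases hj with h | h
    · have : (j:ℝ) ≤ A := by exact_mod_cast (by omega : j ≤ A)
      rw [hx]; exact le_trans (by linarith) (neg_le_abs _)
    · have : (B:ℝ) + 1 ≤ j := by exact_mod_cast h
      rw [hx]; exact le_trans (by linarith) (le_abs_self _)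
  have t2 : |E2 - ∑ j ∈ W, ((j:ℝ) - a)^2 * w j| ≤ (1/x^2) * (17000 * s^4) := by
    refine tail_bound _ H W E2 _ _ hE2 hS4 hT4 H0 (by positivity) fun j hj => ?_
    have h := out j hj
    have h1 : x^2 ≤ ((j:ℝ)-a)^2 := by rw [← sq_abs ((j:ℝ)-a)]; exact pow_le_pow_left₀ hxp.le h 2
    rw [abs_of_nonneg (mul_nonneg (by positivity) (hw j)), one_div_mul_eq_div, le_div_iff₀ (by positivity)]
    simp only [hH]
    have := mul_le_mul_of_nonneg_left h1 (mul_nonneg (sq_nonneg ((j:ℝ)-a)) (hw j))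
    nlinarith
  have t1 : |E1 - ∑ j ∈ W, ((j:ℝ) - a) * w j| ≤ (1/x^3) * (17000 * s^4) := by
    refine tail_bound _ H W E1 _ _ hE1 hS4 hT4 H0 (by positivity) fun j hj => ?_
    have h := out j hj
    have h1 : x^3 ≤ |(j:ℝ)-a|^3 := pow_le_pow_left₀ hxp.le h 3
    rw [abs_mul, abs_of_nonneg (hw j), one_div_mul_eq_div, le_div_iff₀ (by positivity)]
    simp only [hH]
    have := mul_le_mul_of_nonneg_left h1 (mul_nonneg (abs_nonneg ((j:ℝ)-a)) (hw j))
    have e : ((j:ℝ)-a)^4 = |(j:ℝ)-a|^4 := (Even.pow_abs (by decide) _).symm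
    rw [e]
    linarith
  have t0 : |1 - ∑ j ∈ W', w j| ≤ (1/x^4) * (17000 * s^4) := by
    refine tail_bound _ H W' 1 _ _ hw1 hS4 hT4 H0 (by positivity) fun j hj => ?_
    have h := out' j hj
    have h1 : x^4 ≤ |(j:ℝ)-a|^4 := pow_le_pow_left₀ hxp.le h 4
    rw [abs_of_nonneg (hw j), one_div_mul_eq_div, le_div_iff₀ (by positivity)]
    simp only [hH]
    have e : ((j:ℝ)-a)^4 = |(j:ℝ)-a|^4 := (Even.pow_abs (by decide) _).symm
    rw [e]
    nlinarith [mul_le_mul_of_nonneg_left h1 (hw j)]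
  have absW : ∑ j ∈ W, |(j:ℝ) - a| * w j ≤ 17001 * s := by
    have h1 : ∑ j ∈ W, w j ≤ 1 := sum_le_hasSum W (fun j _ => hw j) hw1
    have h2 : ∑ j ∈ W, H j ≤ 17000 * s^4 := (hS4.sum_le_tsum W (fun j _ => H0 j)).trans hT4
    have h3 : ∑ j ∈ W, |(j:ℝ) - a| * w j ≤ s * ∑ j ∈ W, w j + (1/s^3) * ∑ j ∈ W, H j := by
      rw [Finset.mul_sum, Finset.mul_sum, ← Finset.sum_add_distrib]
      refine Finset.sum_le_sum fun j _ => ?_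
      have : |(j:ℝ) - a| ≤ s + (1/s^3) * ((j:ℝ)-a)^4 := by
        have e : ((j:ℝ)-a)^4 = |(j:ℝ)-a|^4 := (Even.pow_abs (by decide) _).symm
        rw [e, one_div_mul_eq_div]
        set t := |(j:ℝ)-a|
        have ht : 0 ≤ t := abs_nonneg _
        rcases le_total t s with h | h
        · have : 0 ≤ t^4 / s^3 := by positivity
          linarith
        · have : t ≤ t^4 / s^3 := by
            rw [le_div_iff₀ (by positivity)]
            have := mul_le_mul_of_nonneg_left (pow_le_pow_left₀ hsp.le h 3) ht
            linarith
          linarith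
      have := mul_le_mul_of_nonneg_right this (hw j)
      simp only [hH]
      linarith
    have h4 : (1/s^3) * ∑ j ∈ W, H j ≤ (1/s^3) * (17000 * s^4) := mul_le_mul_of_nonneg_left h2 (by positivity)
    have h5 : (1/s^3) * (17000 * s^4) = 17000 * s := by field_simp
    nlinarith
  have inW : ∀ j ∈ W, |(j:ℝ) - a| ≤ K * s := by
    intro j hj
    simp only [hWdef, Finset.mem_Ico] at hj
    have h1 : (A:ℝ) ≤ j := by exact_mod_cast hj.1
    have h2 : (j:ℝ) ≤ B := by exact_mod_cast hj.2.le
    rw [abs_le]; constructor <;> linarith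
  -- Abel summation
  have ab0 : ∑ j ∈ W, (w j - w (j+1)) = w A - w B := by
    have := Finset.sum_Ico_sub w hAB
    rw [← neg_sub (w B), ← this, ← Finset.sum_neg_distrib]
    exact Finset.sum_congr rfl fun j _ => by ring
  have ab1 : ∑ j ∈ W, ((j:ℝ) - a) * (w j - w (j+1)) = (A - a) * w A - (B - a) * w B + ∑ j ∈ W', w j := by
    have := Finset.sum_Ico_sub (fun j : ℕ => ((j:ℝ) - a) * w j) hAB
    have h2 : ∑ j ∈ W', w j = ∑ j ∈ W, w (j+1) := by
      rw [hW'def, hWdef, Finset.sum_Ico_add' w A B 1]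
    rw [h2]
    have h3 : ∑ j ∈ W, ((j:ℝ) - a) * (w j - w (j+1)) = - ∑ j ∈ W, ((((j+1:ℕ):ℝ) - a) * w (j+1) - ((j:ℝ) - a) * w j) + ∑ j ∈ W, w (j+1) := by
      rw [← Finset.sum_neg_distrib, ← Finset.sum_add_distrib]
      exact Finset.sum_congr rfl fun j _ => by push_cast; ring
    rw [h3, this]; ring
  have d0 : |s^2 * (w A - w B) - ∑ j ∈ W, ((j:ℝ) - a) * w j| ≤ ε * s := by
    rw [← ab0, Finset.mul_sum, ← Finset.sum_sub_distrib]
    refine (Finset.abs_sum_le_sum_abs _ _).trans ?_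
    refine (Finset.sum_le_sum fun j hj => hW j (inW j hj)).trans ?_
    rw [← Finset.mul_sum]
    have h1 : ∑ j ∈ W, w j ≤ 1 := sum_le_hasSum W (fun j _ => hw j) hw1
    nlinarith [mul_nonneg hε hsp.le]
  have d1 : |s^2 * ((A - a) * w A - (B - a) * w B + ∑ j ∈ W', w j) - ∑ j ∈ W, ((j:ℝ) - a)^2 * w j| ≤ ε * s * (17001 * s) := by
    rw [← ab1, Finset.mul_sum, ← Finset.sum_sub_distrib]
    refine (Finset.abs_sum_le_sum_abs _ _).trans ?_
    refine le_trans ?_ (mul_le_mul_of_nonneg_left absW (mul_nonneg hε hsp.le))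
    rw [Finset.mul_sum]
    refine Finset.sum_le_sum fun j hj => ?_
    have h := mul_le_mul_of_nonneg_left (hW j (inW j hj)) (abs_nonneg ((j:ℝ) - a))
    rw [← abs_mul] at h
    refine le_trans (le_of_eq ?_) (h.trans (le_of_eq ?_))
    · congr 1; ring
    · ring
  -- numerics
  set y := 1 / K with hy
  have y0 : 0 < y := by positivity
  have y1 : y ≤ 1 := by rw [hy, div_le_one hKp]; linarith
  have yy : ∀ n : ℕ, y^(n+1) ≤ y := fun n => by
    have := mul_le_mul_of_nonneg_left (pow_le_one₀ y0.le y1 (n := n)) y0.le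
    rw [pow_succ]; linarith
  have x2 : (1/x^2) * (17000 * s^4) = 68000 * y^2 * s^2 := by rw [hx, hy]; field_simp; norm_num
  have x3 : (1/x^3) * (17000 * s^4) = 136000 * y^3 * s := by rw [hx, hy]; field_simp; norm_num
  have x4 : (1/x^4) * (17000 * s^4) = 272000 * y^4 := by rw [hx, hy]; field_simp; norm_num
  have x5 : 1/K^5 = y^5 := by rw [hy, one_div_pow]
  rw [x2] at t2; rw [x3] at t1; rw [x4] at t0; rw [x5] at wA wB
  have q2 := yy 1
  have q3 := yy 2
  have q4 := yy 3
  have q5 := yy 4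
  norm_num at q2 q3 q4 q5
  constructor
  · set S2 := ∑ j ∈ W, ((j:ℝ) - a)^2 * w j
    set S0 := ∑ j ∈ W', w j
    have bA : |(A - a) * w A| ≤ 166400 * y := by
      rw [abs_mul, abs_of_nonneg (hw A)]
      have h : |(A:ℝ) - a| ≤ K * s := by rw [abs_le]; constructor <;> linarith
      have h1 := mul_le_mul_of_nonneg_right h (hw A)
      have h2 : K * y^5 = y^4 := by rw [hy]; field_simp
      have h3 := mul_le_mul_of_nonneg_left wA hKp.le
      have h4 : K * (166400 * y^5) = 166400 * y^4 := by rw [← h2]; ring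
      rw [h4] at h3
      have h5 : K * s * w A = K * (s * w A) := by ring
      rw [h5] at h1
      linarith
    have bB : |(B - a) * w B| ≤ 166400 * y := by
      rw [abs_mul, abs_of_nonneg (hw B)]
      have h : |(B:ℝ) - a| ≤ K * s := by rw [abs_le]; constructor <;> linarith
      have h1 := mul_le_mul_of_nonneg_right h (hw B)
      have h2 : K * y^5 = y^4 := by rw [hy]; field_simp
      have h3 := mul_le_mul_of_nonneg_left wB hKp.le
      have h4 : K * (166400 * y^5) = 166400 * y^4 := by rw [← h2]; ring
      rw [h4] at h3
      have h5 : K * s * w B = K * (s * w B) := by ring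
      rw [h5] at h1
      linarith
    have e : E2 / s^2 - 1 = (E2 - S2) / s^2 - (s^2 * ((A - a) * w A - (B - a) * w B + S0) - S2) / s^2
      + (A - a) * w A - (B - a) * w B - (1 - S0) := by field_simp; ring
    have f1 : |(E2 - S2) / s^2| ≤ 68000 * y := by
      rw [abs_div, abs_of_nonneg (sq_nonneg s), div_le_iff₀ (by positivity)]
      refine t2.trans ?_
      exact mul_le_mul_of_nonneg_right (by linarith) (sq_nonneg s)
    have f2 : |(s^2 * ((A - a) * w A - (B - a) * w B + S0) - S2) / s^2| ≤ 17001 * ε := by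
      rw [abs_div, abs_of_nonneg (sq_nonneg s), div_le_iff₀ (by positivity)]
      refine d1.trans (le_of_eq (by ring))
    rw [e]
    rw [abs_le] at *
    constructor <;> linarith [f1.1, f1.2, f2.1, f2.2, bA.1, bA.2, bB.1, bB.2, t0.1, t0.2]
  · set S1 := ∑ j ∈ W, ((j:ℝ) - a) * w j
    have e : E1 / s = (E1 - S1) / s - (s^2 * (w A - w B) - S1) / s + s * w A - s * w B := by
      field_simp; ring
    have f1 : |(E1 - S1) / s| ≤ 136000 * y := by
      rw [abs_div, abs_of_pos hsp, div_le_iff₀ hsp]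
      refine t1.trans ?_
      exact mul_le_mul_of_nonneg_right (by linarith) hsp.le
    have f2 : |(s^2 * (w A - w B) - S1) / s| ≤ ε := by
      rw [abs_div, abs_of_pos hsp, div_le_iff₀ hsp]
      exact d0
    have g1 := mul_nonneg hsp.le (hw A)
    have g2 := mul_nonneg hsp.le (hw B)
    rw [e]
    rw [abs_le] at f1 f2 ⊢
    constructor <;> linarith [f1.1, f1.2, f2.1, f2.2]

noncomputable def FF (m g n x : ℝ) : ℝ := n * (Real.log (x + g + 1) - Real.log (x + g)) - Real.log (x + 1) - Real.log m

noncomputable def GG (g n x : ℝ) : ℝ := n / ((x + g) * (x + g + 1)) + 1 / (x + 1)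

noncomputable def NN (m g x : ℝ) : ℝ := (Real.log (x + 1) + Real.log m) / (Real.log (x + g + 1) - Real.log (x + g))

theorem FF_deriv (m g n x : ℝ) (hg : 0 < g) (hx : 0 ≤ x) : HasDerivAt (FF m g n) (- GG g n x) x := by
  have h1 : HasDerivAt (fun x : ℝ => Real.log (x + g + 1)) (1 / (x + g + 1)) x :=
    (((hasDerivAt_id x).add_const g).add_const 1).log (by simp; linarith)
  have h2 : HasDerivAt (fun x : ℝ => Real.log (x + g)) (1 / (x + g)) x :=
    ((hasDerivAt_id x).add_const g).log (by simp; linarith)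
  have h3 : HasDerivAt (fun x : ℝ => Real.log (x + 1)) (1 / (x + 1)) x :=
    ((hasDerivAt_id x).add_const 1).log (by simp; linarith)
  have := (((h1.sub h2).const_mul n).sub h3).sub_const (Real.log m)
  refine this.congr_deriv ?_
  unfold GG
  have : x + g ≠ 0 := by linarith
  have : x + g + 1 ≠ 0 := by linarith
  have : x + 1 ≠ 0 := by linarith
  field_simp
  ring

theorem GG_anti (g n x y : ℝ) (hg : 0 < g) (hn : 0 ≤ n) (hx : 0 ≤ x) (hxy : x ≤ y) : GG g n y ≤ GG g n x := by
  unfold GG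
  gcongr
  linarith

theorem FF_anti (m g n : ℝ) (hg : 0 < g) (hn : 0 ≤ n) : AntitoneOn (FF m g n) (Set.Ici 0) := by
  refine antitoneOn_of_deriv_nonpos (convex_Ici 0) ?_ ?_ ?_
  · intro x hx
    exact (FF_deriv m g n x hg hx).continuousAt.continuousWithinAt
  · intro x hx
    rw [interior_Ici] at hx
    exact (FF_deriv m g n x hg (le_of_lt hx)).differentiableAt.differentiableWithinAt
  · intro x hx
    rw [interior_Ici] at hx
    have hx : 0 < x := hx
    rw [(FF_deriv m g n x hg hx.le).deriv]
    have : 0 ≤ GG g n x := by unfold GG; positivity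
    linarith

theorem FF_est (m g n a s R η : ℝ) (hg : 0 < g) (hn : 0 ≤ n) (hR : R ≤ a) (hR0 : 0 ≤ R) (hF : FF m g n a = 0)
    (h1 : s^2 * GG g n (a - R) ≤ 1 + η) (h2 : 1 - η ≤ s^2 * GG g n (a + R)) (y : ℝ) (hy : |y - a| ≤ R) :
    |s^2 * FF m g n y + (y - a)| ≤ η * |y - a| := by
  have hd : ∀ x ∈ Set.Icc (a - R) (a + R), HasDerivWithinAt (fun y => s^2 * FF m g n y + y) (s^2 * (- GG g n x) + 1) (Set.Icc (a - R) (a + R)) x := by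
    intro x hx
    exact (((FF_deriv m g n x hg (by linarith [hx.1])).const_mul (s^2)).add (hasDerivAt_id x)).hasDerivWithinAt
  have hb : ∀ x ∈ Set.Icc (a - R) (a + R), ‖s^2 * (- GG g n x) + 1‖ ≤ η := by
    intro x hx
    have i1 := GG_anti g n x (a + R) hg hn (by linarith [hx.1]) hx.2
    have i2 := GG_anti g n (a - R) x hg hn (by linarith) hx.1
    have i3 := mul_le_mul_of_nonneg_left i1 (sq_nonneg s)
    have i4 := mul_le_mul_of_nonneg_left i2 (sq_nonneg s)
    rw [Real.norm_eq_abs, abs_le]; constructor <;> linarith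
  rw [abs_le] at hy
  have := (convex_Icc (a - R) (a + R)).norm_image_sub_le_of_norm_hasDerivWithin_le hd hb
    (x := a) (y := y) ⟨by linarith, by linarith⟩ ⟨by linarith, by linarith⟩
  rw [hF, Real.norm_eq_abs, Real.norm_eq_abs] at this
  convert this using 2
  ring

theorem wgt_ratio (m c n j : ℕ) (hm : 0 < m) (hc : 0 < c) :
    wgt m c n (j+1) = wgt m c n j * Real.exp (FF m ((c:ℝ)/m) n j) := by
  have hm' : (0:ℝ) < m := by exact_mod_cast hm
  have hc' : (0:ℝ) < c := by exact_mod_cast hc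
  set g := (c:ℝ)/m with hg
  have hg0 : 0 < g := by positivity
  have hj : (0:ℝ) ≤ j := Nat.cast_nonneg j
  have e : Real.exp (FF m g n j) = ((j + g + 1) / (j + g))^n / ((j + 1) * m) := by
    unfold FF
    rw [Real.exp_sub, Real.exp_sub, Real.exp_log (by linarith), Real.exp_log hm', Real.exp_nat_mul,
      Real.exp_sub, Real.exp_log (by linarith), Real.exp_log (by linarith)]
    field_simp
  rw [e]
  unfold wgt
  have e1 : (m:ℝ) * ((j+1:ℕ):ℝ) + c = m * (j + g + 1) := by rw [hg]; push_cast; field_simp; ring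
  have e2 : (m:ℝ) * j + c = m * (j + g) := by rw [hg]; field_simp
  rw [e1, e2, Nat.factorial_succ, mul_pow, mul_pow, div_pow, pow_succ]
  have : (j:ℝ) + g ≠ 0 := by linarith
  have : (j.factorial:ℝ) ≠ 0 := by exact_mod_cast Nat.factorial_ne_zero j
  push_cast
  field_simp

theorem exp_neg_bound (s f : ℝ) (hs : 4 ≤ s) (hf : f ≤ -(9/10) / s) : Real.exp f ≤ 1 - 1/(2*s) := by
  have hsp : 0 < s := by linarith
  set t := 1 / s with ht
  have t0 : 0 < t := by positivity
  have t1 : t ≤ 1/4 := by rw [ht, div_le_div_iff₀ hsp (by norm_num)]; linarith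
  have e1 : -(9/10) / s = - (9/10 * t) := by rw [ht]; ring
  have e2 : 1/(2*s) = t/2 := by rw [ht]; field_simp
  rw [e1] at hf; rw [e2]
  refine (Real.exp_le_exp.2 hf).trans ?_
  have h := Real.add_one_le_exp (9/10*t)
  rw [Real.exp_neg]
  refine (inv_anti₀ (by linarith) h).trans ?_
  rw [inv_le_iff_one_le_mul₀ (by linarith)]
  nlinarith

theorem core (m c n : ℕ) (hm : 0 < m) (hc : 0 < c) (a s K ε η : ℝ) (hs : 4 ≤ s) (hK : 4 ≤ K)
    (hsK : 2 * K ≤ s) (hε : 8 * K^2 ≤ ε * s) (hη0 : 0 ≤ η) (hη : η ≤ 1/10) (hηK : 2 * (η * K) ≤ ε)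
    (hKa : K * s ≤ a) (hF : FF m ((c:ℝ)/m) n a = 0)
    (h1 : s^2 * GG ((c:ℝ)/m) n (a - K * s) ≤ 1 + η) (h2 : 1 - η ≤ s^2 * GG ((c:ℝ)/m) n (a + K * s)) :
    ∃ E1 E2 : ℝ, Vn m c n = E2 - E1^2 - 1/m ∧ |E2 / s^2 - 1| ≤ 1000000 * (1/K + ε) ∧
      |E1 / s| ≤ 1000000 * (1/K + ε) := by
  obtain ⟨w, E1, E2, hw, hw1, hE1, hE2, hV⟩ := Vn_eq_var m c n hm hc a
  refine ⟨E1, E2, hV, ?_⟩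
  have hm' : (0:ℝ) < m := by exact_mod_cast hm
  have hc' : (0:ℝ) < c := by exact_mod_cast hc
  have hT : (0:ℝ) < Ttot m c n := by exact_mod_cast (Ttot_pos m c n hc)
  set g := (c:ℝ)/m with hg
  have hg0 : 0 < g := by positivity
  have hsp : 0 < s := by linarith
  have hKp : 0 < K := by linarith
  have ha0 : 0 ≤ a := le_trans (by positivity) hKa
  have hn : (0:ℝ) ≤ n := Nat.cast_nonneg n
  have w0 : ∀ j, 0 ≤ w j := fun j => by
    rw [hw]; exact div_nonneg (wgt_pos m c n j hm hc).le (by positivity)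
  have wr : ∀ j : ℕ, w (j+1) = w j * Real.exp (FF m g n j) := fun j => by
    rw [hw, hw, wgt_ratio m c n j hm hc]; ring
  have wl : ∀ j : ℕ, w j = w (j+1) * Real.exp (- FF m g n j) := fun j => by
    rw [wr j, mul_assoc, ← Real.exp_add]; simp
  have anti := FF_anti m g n hg0 hn
  have est := FF_est m g n a s (K * s) η hg0 hn hKa (by positivity) hF h1 h2
  have hsa : s ≤ K * s := by nlinarith
  have div_help : ∀ f : ℝ, s^2 * f ≤ -(9/10) * s → f ≤ -(9/10) / s := fun f h => by
    rw [le_div_iff₀ hsp]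
    have : (f * s) * s ≤ (-(9/10)) * s := by linarith
    exact le_of_mul_le_mul_right this hsp
  refine var_lemma w a s K ε E1 E2 w0 hw1 hE1 hE2 (by linarith) hK ?_ hKa ?_ ?_ ?_ ?_ ?_
  · exact le_trans (by positivity) hηK
  · intro j hj
    have := anti (Set.mem_Ici.2 ha0) (Set.mem_Ici.2 (ha0.trans hj)) hj
    rw [hF] at this
    rw [wr j]
    exact mul_le_of_le_one_right (w0 j) (Real.exp_le_one_iff.2 this)
  · intro j hj
    have := anti (Set.mem_Ici.2 (Nat.cast_nonneg j)) (Set.mem_Ici.2 ha0) hj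
    rw [hF] at this
    rw [wl j]
    exact mul_le_of_le_one_right (w0 _) (Real.exp_le_one_iff.2 (by linarith))
  · intro j hj
    have h3 := anti (Set.mem_Ici.2 (by linarith)) (Set.mem_Ici.2 (Nat.cast_nonneg j)) hj
    have h4 := est (a + s) (by rw [add_sub_cancel_left, abs_of_pos hsp]; exact hsa)
    rw [add_sub_cancel_left, abs_of_pos hsp, abs_le] at h4
    have h5 := div_help (FF m g n (a + s)) (by nlinarith [h4.2])
    rw [wr j, mul_comm]
    exact mul_le_mul_of_nonneg_right (exp_neg_bound s _ hs (h3.trans h5)) (w0 j)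
  · intro j hj
    have h3 := anti (Set.mem_Ici.2 (Nat.cast_nonneg j)) (Set.mem_Ici.2 (by linarith : 0 ≤ a - s)) hj
    have e : |a - s - a| = s := by rw [show a - s - a = -s by ring, abs_neg, abs_of_pos hsp]
    have h4 := est (a - s) (by rw [e]; exact hsa)
    rw [e, abs_le] at h4
    have h5 := div_help (- FF m g n (a - s)) (by nlinarith [h4.1])
    rw [wl j, mul_comm]
    exact mul_le_mul_of_nonneg_right (exp_neg_bound s _ hs (by linarith)) (w0 _)
  · intro j hj
    have h3 := est j hj
    set f := FF m g n j with hf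
    set i := (j:ℝ) - a with hi
    have h4 : |s^2 * f| ≤ 2 * (K * s) := by
      have : |s^2 * f| ≤ |s^2 * f + i| + |i| := by
        have := abs_sub (s^2 * f + i) i
        rwa [add_sub_cancel_right] at this
      nlinarith [abs_nonneg i]
    have h5 : |f| * s ≤ 2 * K := by
      rw [abs_mul, abs_of_pos (by positivity : 0 < s^2)] at h4
      have : (|f| * s) * s ≤ (2 * K) * s := by linarith
      exact le_of_mul_le_mul_right this hsp
    have h6 : |f| ≤ 1 := by
      have : |f| * s ≤ 1 * s := by linarith
      exact le_of_mul_le_mul_right this hsp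
    have h7 := Real.abs_exp_sub_one_sub_id_le h6
    have h8 : s^2 * f^2 ≤ 4 * K^2 := by
      have := pow_le_pow_left₀ (by positivity) h5 2
      rw [mul_pow, sq_abs] at this
      linarith
    have h9 : |s^2 * (1 - Real.exp f) - i| ≤ ε * s := by
      have e : s^2 * (1 - Real.exp f) - i = - (s^2 * (Real.exp f - 1 - f)) - (s^2 * f + i) := by ring
      rw [e]
      refine (abs_sub _ _).trans ?_
      rw [abs_neg, abs_mul, abs_of_pos (by positivity : 0 < s^2)]
      have b1 := mul_le_mul_of_nonneg_left h7 (sq_nonneg s)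
      have b2 := mul_le_mul_of_nonneg_left hj hη0
      have b3 := mul_le_mul_of_nonneg_right hηK hsp.le
      linarith
    have e2 : s^2 * (w j - w (j+1)) - i * w j = (s^2 * (1 - Real.exp f) - i) * w j := by
      rw [wr j]; ring
    rw [e2, abs_mul, abs_of_nonneg (w0 j)]
    exact mul_le_mul_of_nonneg_right h9 (w0 j)

theorem lim_inv_log : Tendsto (fun x : ℝ => 1 / Real.log x) atTop (nhds 0) := by
  simp only [one_div]
  exact Real.tendsto_log_atTop.inv_tendsto_atTop

theorem lim_div_add (d : ℝ) : Tendsto (fun x : ℝ => x / (x + d)) atTop (nhds 1) := by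
  have h1 : Tendsto (fun x : ℝ => d / (x + d)) atTop (nhds 0) :=
    tendsto_const_nhds.div_atTop (tendsto_atTop_add_const_right _ d tendsto_id)
  have h2 := (tendsto_const_nhds (x := (1:ℝ))).sub h1
  rw [sub_zero] at h2
  refine h2.congr' ?_
  filter_upwards [eventually_gt_atTop (-d)] with x hx
  have : x + d ≠ 0 := by linarith
  field_simp
  ring

theorem lim_xlog (g : ℝ) : Tendsto (fun x : ℝ => x * (Real.log (x + g + 1) - Real.log (x + g))) atTop (nhds 1) := by
  have h1 := (Real.tendsto_mul_log_one_add_div_atTop 1).comp (tendsto_atTop_add_const_right atTop g tendsto_id)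
  have h2 := h1.mul (lim_div_add g)
  rw [one_mul] at h2
  refine h2.congr' ?_
  filter_upwards [eventually_gt_atTop (-g)] with x hx
  have hp : 0 < x + g := by linarith
  simp only [Function.comp, id]
  rw [show (1:ℝ) + 1/(x+g) = (x+g+1)/(x+g) by field_simp, Real.log_div (by linarith) (by linarith)]
  field_simp

theorem lim_NN (m g : ℝ) : Tendsto (fun x : ℝ => NN m g x / (x * Real.log x)) atTop (nhds 1) := by
  have h1 : Tendsto (fun x : ℝ => (Real.log (x + 1) + Real.log m) / Real.log x) atTop (nhds 1) := by
    have a1 := Real.tendsto_log_comp_add_sub_log 1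
    have a2 := ((a1.add_const (Real.log m)).mul lim_inv_log).const_add 1
    simp only [mul_zero, add_zero] at a2
    refine a2.congr' ?_
    filter_upwards [Real.tendsto_log_atTop.eventually_gt_atTop 0] with x hx
    field_simp
    ring
  have h2 := h1.div (lim_xlog g) one_ne_zero
  rw [div_one] at h2
  refine h2.congr fun x => ?_
  simp only [Pi.div_apply, NN]
  rw [div_div, div_div]
  congr 1
  ring

theorem lim_sqrt (κ d : ℝ) : Tendsto (fun x : ℝ => x / (x + κ * √(x / Real.log x) + d)) atTop (nhds 1) := by
  have h1 : Tendsto (fun x : ℝ => √(x / Real.log x) / x) atTop (nhds 0) := by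
    have : Tendsto (fun x : ℝ => √(1 / x * (1 / Real.log x))) atTop (nhds 0) := by
      have h := (tendsto_inv_atTop_zero (𝕜 := ℝ)).mul lim_inv_log
      rw [mul_zero] at h
      have := (Real.continuous_sqrt.tendsto 0).comp h
      simpa [Function.comp_def] using this
    refine this.congr' ?_
    filter_upwards [eventually_gt_atTop 0] with x hx
    rw [show 1 / x * (1 / Real.log x) = (x / Real.log x) / x^2 by field_simp, Real.sqrt_div' _ (sq_nonneg x), Real.sqrt_sq hx.le]
  have h2 : Tendsto (fun x : ℝ => d / x) atTop (nhds 0) := tendsto_const_nhds.div_atTop tendsto_id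
  have h3 := (((h1.const_mul κ).const_add 1).add h2).inv₀ (by norm_num)
  simp only [mul_zero, add_zero, inv_one] at h3
  refine h3.congr' ?_
  filter_upwards [eventually_gt_atTop 0] with x hx
  rw [inv_eq_one_div, ← mul_div_mul_left 1 _ hx.ne']
  congr 1
  · ring
  · field_simp

theorem lim_GG (m g κ : ℝ) : Tendsto (fun x : ℝ => (x / Real.log x) * GG g (NN m g x) (x + κ * √(x / Real.log x))) atTop (nhds 1) := by
  have h := (((lim_NN m g).mul (lim_sqrt κ g)).mul (lim_sqrt κ (g+1))).add (lim_inv_log.mul (lim_sqrt κ 1))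
  simp only [mul_one, add_zero] at h
  refine h.congr' ?_
  filter_upwards [eventually_gt_atTop 0, Real.tendsto_log_atTop.eventually_gt_atTop 0] with x hx hl
  unfold GG
  generalize x + κ * √(x / Real.log x) = y
  rw [show y + (g+1) = y + g + 1 by ring, mul_add]
  congr 1
  · rw [div_mul_div_comm, div_mul_div_comm, div_mul_div_comm, ← mul_div_mul_left (x * NN m g x) _ hx.ne']
    congr 1 <;> ring
  · rw [div_mul_div_comm, div_mul_div_comm]; ring

theorem lim_sig (m g : ℝ) : Tendsto (fun x : ℝ => (x / Real.log x) * (Real.log (NN m g x))^2 / NN m g x) atTop (nhds 1) := by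
  have hN := lim_NN m g
  have h1 : Tendsto (fun x : ℝ => Real.log (NN m g x) / Real.log x) atTop (nhds 1) := by
    have a1 := (Real.continuousAt_log one_ne_zero).tendsto.comp hN
    rw [Real.log_one] at a1
    have a2 := a1.mul lim_inv_log
    have a3 : Tendsto (fun x : ℝ => Real.log (Real.log x) / Real.log x) atTop (nhds 0) := by
      have := Real.isLittleO_log_id_atTop.tendsto_div_nhds_zero.comp Real.tendsto_log_atTop
      simpa [Function.comp_def] using this
    have a4 := (a2.add a3).add_const 1
    simp only [mul_zero, add_zero, zero_add] at a4
    refine a4.congr' ?_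
    filter_upwards [eventually_gt_atTop 0, Real.tendsto_log_atTop.eventually_gt_atTop 0, hN.eventually (eventually_gt_nhds (show (0:ℝ) < 1 by norm_num))] with x hx hl hp
    simp only [Function.comp]
    have hNp : 0 < NN m g x := by
      have := mul_pos hp (mul_pos hx hl)
      rwa [div_mul_cancel₀ _ (mul_pos hx hl).ne'] at this
    rw [Real.log_div hNp.ne' (mul_pos hx hl).ne', Real.log_mul hx.ne' hl.ne']
    field_simp
    ring
  have h2 := (h1.pow 2).div hN one_ne_zero
  simp only [one_pow, div_one] at h2
  refine h2.congr' ?_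
  filter_upwards [eventually_gt_atTop 0, Real.tendsto_log_atTop.eventually_gt_atTop 0, hN.eventually (eventually_gt_nhds (show (0:ℝ) < 1 by norm_num))] with x hx hl hp
  have hNp : 0 < NN m g x := by
    have := mul_pos hp (mul_pos hx hl)
    rwa [div_mul_cancel₀ _ (mul_pos hx hl).ne'] at this
  simp only [Pi.div_apply]
  field_simp

theorem logdiff_pos (g x : ℝ) (hg : 0 < g) (hx : 0 ≤ x) : 0 < Real.log (x + g + 1) - Real.log (x + g) :=
  sub_pos.2 (Real.log_lt_log (by linarith) (by linarith))

theorem exists_root (m : ℕ) (g : ℝ) (hm : 0 < m) (hg : 0 < g) :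
    ∃ a : ℕ → ℝ, Tendsto a atTop atTop ∧ ∀ᶠ n : ℕ in atTop, FF m g n (a n) = 0 ∧ NN m g (a n) = n := by
  have hm1 : (1:ℝ) ≤ m := by exact_mod_cast hm
  have hlm : 0 ≤ Real.log m := Real.log_nonneg hm1
  have big : ∀ x : ℝ, 0 ≤ x → Tendsto (fun n : ℕ => FF m g n x) atTop atTop := by
    intro x hx
    have h1 : Tendsto (fun n : ℕ => (n:ℝ) * (Real.log (x + g + 1) - Real.log (x + g))) atTop atTop :=
      tendsto_natCast_atTop_atTop.atTop_mul_const (logdiff_pos g x hg hx)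
    have := tendsto_atTop_add_const_right atTop (- Real.log (x+1) - Real.log m) h1
    refine this.congr fun n => ?_
    unfold FF; ring
  have ex : ∀ᶠ n : ℕ in atTop, ∃ a : ℝ, 0 ≤ a ∧ FF m g n a = 0 := by
    filter_upwards [(big 0 le_rfl).eventually_ge_atTop 0, eventually_ge_atTop 2] with n h0 h2
    have hn : (2:ℝ) ≤ n := by exact_mod_cast h2
    have hneg : FF m g n n ≤ 0 := by
      unfold FF
      have e : Real.log ((n:ℝ) + g + 1) - Real.log (n + g) ≤ 1 / (n + g) := by
        rw [← Real.log_div (by linarith) (by linarith)]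
        have := Real.log_le_sub_one_of_pos (show 0 < ((n:ℝ) + g + 1) / (n + g) by positivity)
        refine this.trans (le_of_eq ?_)
        have : (n:ℝ) + g ≠ 0 := by linarith
        field_simp; ring
      have e2 : (n:ℝ) * (1 / (n + g)) ≤ 1 := by
        rw [mul_one_div, div_le_one (by linarith)]; linarith
      have e3 := mul_le_mul_of_nonneg_left e (by linarith : (0:ℝ) ≤ n)
      have e4 : 1 ≤ Real.log ((n:ℝ) + 1) := by
        rw [Real.le_log_iff_exp_le (by linarith)]
        have := Real.exp_one_lt_d9
        linarith
      linarith
    have hc : ContinuousOn (FF m g n) (Set.Icc 0 n) := fun x hx =>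
      (FF_deriv m g n x hg hx.1).continuousAt.continuousWithinAt
    obtain ⟨a, ha, hF⟩ := intermediate_value_Icc' (by linarith : (0:ℝ) ≤ n) hc ⟨hneg, h0⟩
    exact ⟨a, ha.1, hF⟩
  have ch : ∀ n : ℕ, ∃ a : ℝ, (∃ a : ℝ, 0 ≤ a ∧ FF m g n a = 0) → 0 ≤ a ∧ FF m g n a = 0 := by
    intro n
    by_cases h : ∃ a : ℝ, 0 ≤ a ∧ FF m g n a = 0
    · obtain ⟨a, ha⟩ := h; exact ⟨a, fun _ => ha⟩
    · exact ⟨0, fun h' => absurd h' h⟩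
  choose a ha using ch
  refine ⟨a, ?_, ?_⟩
  · rw [tendsto_atTop]
    intro M
    filter_upwards [ex, (big (max M 0) (le_max_right _ _)).eventually_gt_atTop 0] with n h1 h2
    obtain ⟨h3, h4⟩ := ha n h1
    by_contra h
    push Not at h
    have := FF_anti m g n hg (Nat.cast_nonneg n) (Set.mem_Ici.2 h3) (Set.mem_Ici.2 (le_max_right M 0)) (h.le.trans (le_max_left M 0))
    linarith
  · filter_upwards [ex] with n h1
    obtain ⟨h3, h4⟩ := ha n h1
    refine ⟨h4, ?_⟩
    unfold NN
    rw [div_eq_iff (logdiff_pos g _ hg h3).ne']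
    unfold FF at h4
    linarith

set_option maxHeartbeats 2000000 in
theorem main_limit (m c : ℕ) (hm : 0 < m) (hc : 0 < c) :
    Tendsto (fun n : ℕ => Vn m c n * (Real.log n) ^ 2 / n) atTop (nhds 1) := by
  have hm' : (0:ℝ) < m := by exact_mod_cast hm
  have hm1 : (1:ℝ) ≤ m := by exact_mod_cast hm
  have hc' : (0:ℝ) < c := by exact_mod_cast hc
  set g := (c:ℝ)/m with hg
  have hg0 : 0 < g := by positivity
  obtain ⟨a, hat, hroot⟩ := exists_root m g hm hg0
  set s : ℕ → ℝ := fun n => √(a n / Real.log (a n)) with hs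
  have hpos : ∀ᶠ n in atTop, 0 < a n ∧ 0 < Real.log (a n) :=
    (hat.eventually_gt_atTop 0).and ((Real.tendsto_log_atTop.comp hat).eventually_gt_atTop 0)
  have hs2 : ∀ᶠ n in atTop, s n ^ 2 = a n / Real.log (a n) := by
    filter_upwards [hpos] with n h
    exact Real.sq_sqrt (div_nonneg h.1.le h.2.le)
  have hst : Tendsto s atTop atTop := by
    have h1 : Tendsto (fun x : ℝ => x / Real.log x) atTop atTop := by
      have h := Real.isLittleO_log_id_atTop.tendsto_div_nhds_zero
      have h' : Tendsto (fun x : ℝ => Real.log x / x) atTop (nhdsWithin 0 (Set.Ioi 0)) := by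
        refine tendsto_nhdsWithin_iff.2 ⟨h, ?_⟩
        filter_upwards [eventually_gt_atTop 0, Real.tendsto_log_atTop.eventually_gt_atTop 0] with x hx hl
        exact div_pos hl hx
      have := h'.inv_tendsto_nhdsGT_zero
      refine this.congr fun x => ?_
      simp
    exact Real.tendsto_sqrt_atTop.comp (h1.comp hat)
  have key : Tendsto (fun n => Vn m c n / s n ^ 2) atTop (nhds 1) := by
    rw [Metric.tendsto_atTop']
    intro δ hδ
    set θ := min 1 (δ/4) with hθ
    have hθ0 : 0 < θ := by positivity
    have hθ1 : θ ≤ 1 := min_le_left _ _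
    have hθδ : θ ≤ δ/4 := min_le_right _ _
    set K := max 4 (2000000 / θ) with hKd
    have hK4 : 4 ≤ K := le_max_left _ _
    have hKp : 0 < K := by linarith
    have hKθ : 2000000 * (1/K) ≤ θ := by
      rw [mul_one_div, div_le_iff₀ hKp]
      have := le_max_right 4 (2000000 / θ)
      rw [← hKd, div_le_iff₀ hθ0] at this
      linarith
    set ε := 1/K with hε
    have hε0 : 0 < ε := by positivity
    have hKε : K * ε = 1 := by rw [hε]; field_simp
    set η := min (1/10) (ε/(2*K)) with hη
    have hη0 : 0 < η := by positivity
    have hη1 : η ≤ 1/10 := min_le_left _ _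
    have hη2 : 2 * (η * K) ≤ ε := by
      have : η ≤ ε/(2*K) := min_le_right _ _
      rw [le_div_iff₀ (by positivity)] at this
      linarith
    have hKa : ∀ᶠ n in atTop, K * s n ≤ a n := by
      filter_upwards [hpos, hs2, (Real.tendsto_log_atTop.comp hat).eventually_ge_atTop 1, hst.eventually_ge_atTop K] with n hp h2 hl hK
      simp only [Function.comp] at hl
      have h3 : a n / Real.log (a n) ≤ a n := div_le_self hp.1.le hl
      rw [← h2] at h3
      nlinarith
    have g1 := ((lim_GG m g (-K)).comp hat).eventually (eventually_le_nhds (show (1:ℝ) < 1 + η by linarith))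
    have g2 := ((lim_GG m g K).comp hat).eventually (eventually_ge_nhds (show 1 - η < (1:ℝ) by linarith))
    have fin : ∀ᶠ n in atTop, dist (Vn m c n / s n ^ 2) 1 < δ := by
      filter_upwards [hroot, hs2, hKa, g1, g2, hst.eventually_ge_atTop 4, hst.eventually_ge_atTop (2*K),
        hst.eventually_ge_atTop (8*K^2/ε), hst.eventually_ge_atTop K] with n hr h2 hKa g1 g2 s4 sK sε sK'
      simp only [Function.comp] at g1 g2
      rw [← h2, hr.2] at g1 g2
      have e1 : √(a n / Real.log (a n)) = s n := rfl
      have e2 : √(s n ^ 2) = s n := Real.sqrt_sq (by linarith)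
      simp only [e1, e2] at g1 g2
      rw [neg_mul, ← sub_eq_add_neg] at g1
      obtain ⟨E1, E2, hV, b1, b2⟩ := core m c n hm hc (a n) (s n) K ε η s4 hK4 sK
        (by rw [div_le_iff₀ hε0] at sε; linarith) hη0.le hη1 hη2 hKa hr.1 g1 g2
      have hsp : 0 < s n := by linarith
      have b3 : 1 / m / s n ^ 2 ≤ θ := by
        rw [div_div, div_le_iff₀ (by positivity)]
        have : K ≤ s n ^ 2 := by nlinarith
        have : K ≤ m * s n ^ 2 := by nlinarith
        have := mul_le_mul_of_nonneg_left this hθ0.le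
        have h5 := mul_le_mul_of_nonneg_right hKθ hKp.le
        have : 2000000 * ε * K = 2000000 := by linarith
        linarith
      have b3' : 0 ≤ 1 / m / s n ^ 2 := by positivity
      have b1' : |E2 / s n ^ 2 - 1| ≤ θ := by linarith
      have b2' : |E1 / s n| ≤ θ := by linarith
      have b4 : (E1 / s n)^2 ≤ θ := by
        rw [← sq_abs]
        nlinarith [abs_nonneg (E1 / s n)]
      have b4' := sq_nonneg (E1 / s n)
      have e : Vn m c n / s n ^ 2 - 1 = (E2 / s n ^ 2 - 1) - (E1 / s n)^2 - 1 / m / s n ^ 2 := by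
        rw [hV, div_pow]; ring
      rw [Real.dist_eq, e]
      rw [abs_le] at b1'
      rw [abs_lt]
      constructor <;> linarith [b1'.1, b1'.2]
    obtain ⟨N, hN⟩ := eventually_atTop.1 fin
    exact ⟨N, fun n hn => hN n hn.le⟩
  have h2 := key.mul ((lim_sig m g).comp hat)
  rw [mul_one] at h2
  refine h2.congr' ?_
  filter_upwards [hroot, hs2, hst.eventually_gt_atTop 0] with n hr h2 h0
  simp only [Function.comp]
  rw [hr.2, ← h2]
  field_simp

theorem lim_n_log : Tendsto (fun n : ℕ => (n:ℝ) / (Real.log n)^2) atTop atTop := by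
  have h : Tendsto (fun x : ℝ => x / (Real.log x)^2) atTop atTop := by
    have h := (isLittleO_log_rpow_atTop (show (0:ℝ) < 1/2 by norm_num)).tendsto_div_nhds_zero
    have h1 := h.pow 2
    have h' : Tendsto (fun x : ℝ => (Real.log x)^2 / x) atTop (nhdsWithin 0 (Set.Ioi 0)) := by
      refine tendsto_nhdsWithin_iff.2 ⟨?_, ?_⟩
      · rw [zero_pow two_ne_zero] at h1
        refine h1.congr' ?_
        filter_upwards [eventually_gt_atTop 0] with x hx
        rw [div_pow, ← Real.sqrt_eq_rpow, Real.sq_sqrt hx.le]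
      · filter_upwards [eventually_gt_atTop 0, Real.tendsto_log_atTop.eventually_gt_atTop 0] with x hx hl
        exact div_pos (pow_pos hl 2) hx
    refine h'.inv_tendsto_nhdsGT_zero.congr fun x => ?_
    simp
  exact h.comp tendsto_natCast_atTop_atTop


/-- `V_n ~ n/log² n` as `n → ∞`, i.e. `V_n·(log² n)/n → 1`; in particular
`V_n → ∞`. -/
theorem stmt_18 (m c : ℕ) (hm : 0 < m) (hc : 0 < c) :
    Tendsto (fun n : ℕ => Vn m c n * (Real.log n) ^ 2 / n) atTop (nhds 1) ∧
    Tendsto (fun n : ℕ => Vn m c n) atTop atTop := by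
  have h := main_limit m c hm hc
  refine ⟨h, ?_⟩
  have h2 := h.pos_mul_atTop (by norm_num) lim_n_log
  refine h2.congr' ?_
  filter_upwards [eventually_gt_atTop 0, (Real.tendsto_log_atTop.comp tendsto_natCast_atTop_atTop).eventually_gt_atTop 0] with n hn hl
  simp only [Function.comp] at hl
  have : (n:ℝ) ≠ 0 := by exact_mod_cast hn.ne'
  have := hl.ne'
  field_simp
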